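/- arXiv:1711.05399 — 5 statements merged into one kernel-verified Lean document; each statement's English description precedes it below -/
import Mathlib

section
/- Let R be an integral domain and h a prime valuation on R. Then the function h̃ : Ideal(R) → ℕ∞ defined by h̃(I) = sup{ inf{h(P) : P a prime ideal of R with J ⊆ P} : J ⊆ I, J a finitely generated ideal of R } (with the convention that the infimum over the empty set of primes is ∞) is an ideal valuation on R. -/
/-- An ideal valuation on an integral domain `R`. -/
def IsIdealValuation (R : Type*) [CommRing R] (ν : Ideal R → ℕ∞) : Prop :=
  ν ⊥ = 0 ∧ ν ⊤ = ⊤ ∧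
  (∀ I J : Ideal R, min (ν I) (ν J) ≤ ν (I * J)) ∧
  (∀ I : Ideal R, ν I = ⨆ (J : Ideal R) (_ : J ≤ I) (_ : J.FG), ν J)

/-- A prime valuation on an integral domain `R`: a function on prime ideals with
`h 0 = 0` that is monotone with respect to inclusion. -/
def IsPrimeValuation (R : Type*) [CommRing R] (h : PrimeSpectrum R → ℕ∞) : Prop :=
  (∀ P : PrimeSpectrum R, P.asIdeal = ⊥ → h P = 0) ∧
  (∀ P Q : PrimeSpectrum R, P.asIdeal ≤ Q.asIdeal → h P ≤ h Q)

theorem idealValuation_of_primeValuation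
    (R : Type*) [CommRing R] [IsDomain R] (h : PrimeSpectrum R → ℕ∞)
    (hpv : IsPrimeValuation R h) :
    IsIdealValuation R
      (fun I => ⨆ (J : Ideal R) (_ : J ≤ I) (_ : J.FG),
        ⨅ (P : PrimeSpectrum R) (_ : J ≤ P.asIdeal), h P) := by
  refine ⟨?_, ?_, ?_, ?_⟩
  · refine le_antisymm ?_ bot_le
    refine iSup_le fun J => iSup_le fun hJ => iSup_le fun _ => ?_
    have h0 : h ⟨⊥, Ideal.isPrime_bot⟩ = 0 := hpv.1 _ rfl
    rw [← h0]
    exact iInf₂_le (f := fun (P : PrimeSpectrum R) (_ : J ≤ P.asIdeal) => h P)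
      ⟨⊥, Ideal.isPrime_bot⟩ hJ
  · refine top_le_iff.mp ?_
    refine le_iSup_of_le (⊤ : Ideal R) (le_iSup_of_le le_rfl
      (le_iSup_of_le (Module.Finite.fg_top : (⊤ : Ideal R).FG) ?_))
    refine le_iInf fun P => le_iInf fun hP => ?_
    exact absurd (top_le_iff.mp hP) P.isPrime.ne_top
  · intro I J
    refine le_of_forall_lt fun c hc => ?_
    obtain ⟨hI, hJ⟩ := lt_min_iff.mp hc
    simp only [lt_iSup_iff] at hI hJ
    obtain ⟨A, hA, hAf, hcA⟩ := hI
    obtain ⟨B, hB, hBf, hcB⟩ := hJ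
    refine lt_of_lt_of_le (lt_min hcA hcB) ?_
    refine le_iSup_of_le (A * B) (le_iSup_of_le (Ideal.mul_mono hA hB)
      (le_iSup_of_le (hAf.mul hBf) ?_))
    refine le_iInf fun P => le_iInf fun hP => ?_
    rcases P.isPrime.mul_le.mp hP with h1 | h1
    · exact (min_le_left _ _).trans (iInf₂_le P h1)
    · exact (min_le_right _ _).trans (iInf₂_le P h1)
  · intro I
    apply le_antisymm
    · refine iSup_le fun J => iSup_le fun hJ => iSup_le fun hf => ?_
      refine le_iSup_of_le J (le_iSup_of_le hJ (le_iSup_of_le hf ?_))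
      exact le_iSup_of_le J (le_iSup_of_le le_rfl (le_iSup_of_le hf le_rfl))
    · refine iSup_le fun J => iSup_le fun hJ => iSup_le fun _ => ?_
      refine iSup_le fun K => iSup_le fun hK => iSup_le fun hf => ?_
      exact le_iSup_of_le K (le_iSup_of_le (hK.trans hJ) (le_iSup_of_le hf le_rfl))
end

section
/- Let R be an integral domain with quotient field K, and let {*_n}_{n≥0} be a standard, countable descending chain of finite type, stable semistar operations on R, i.e., each *_n is a finite type stable semistar operation, *_0 = e, and E^{*_{n+1}} ⊆ E^{*_n} for every n ≥ 0 and every E ∈ F̄(R). Define ν_C : Ideal(R) → ℕ∞ by ν_C(0) = 0 and ν_C(I) = sup{k ∈ ℕ : I^{*_k} = R^{*_k}} for nonzero ideals I. Then ν_C is an ideal valuation on R. -/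
open Pointwise

/-- A semistar operation on an integral domain `R` with quotient field `K`, viewed as an
operation on `R`-submodules of `K` (only its behaviour on nonzero submodules matters). -/
def IsSemistarOp (R : Type*) [CommRing R] [IsDomain R]
    (s : Submodule R (FractionRing R) → Submodule R (FractionRing R)) : Prop :=
  (∀ E : Submodule R (FractionRing R), E ≠ ⊥ → E ≤ s E) ∧
  (∀ E F : Submodule R (FractionRing R), E ≠ ⊥ → F ≠ ⊥ → E ≤ F → s E ≤ s F) ∧
  (∀ x : FractionRing R, x ≠ 0 → ∀ E : Submodule R (FractionRing R), E ≠ ⊥ →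
      s (x • E) = x • s E) ∧
  (∀ E : Submodule R (FractionRing R), E ≠ ⊥ → s (s E) = s E)

/-- A semistar operation is stable if it distributes over finite intersections. -/
def IsStableStar (R : Type*) [CommRing R] [IsDomain R]
    (s : Submodule R (FractionRing R) → Submodule R (FractionRing R)) : Prop :=
  ∀ E F : Submodule R (FractionRing R), E ≠ ⊥ → F ≠ ⊥ → s (E ⊓ F) = s E ⊓ s F

/-- A semistar operation is of finite type if `E^* = ∪ {J^* : J ⊆ E, J nonzero f.g.}`. -/
def IsFiniteTypeStar (R : Type*) [CommRing R] [IsDomain R]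
    (s : Submodule R (FractionRing R) → Submodule R (FractionRing R)) : Prop :=
  ∀ E : Submodule R (FractionRing R), E ≠ ⊥ →
    (s E : Set (FractionRing R)) =
      ⋃ J ∈ {J : Submodule R (FractionRing R) | J ≤ E ∧ J ≠ ⊥ ∧ J.FG},
        (s J : Set (FractionRing R))

/-- The image of an ideal of `R` in the quotient field, as an `R`-submodule. -/
def idealToFrac (R : Type*) [CommRing R] [IsDomain R] (I : Ideal R) :
    Submodule R (FractionRing R) :=
  Submodule.map (Algebra.linearMap R (FractionRing R)) I

theorem idealToFrac_ne_bot {R : Type*} [CommRing R] [IsDomain R] {I : Ideal R} (hI : I ≠ ⊥) :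
    idealToFrac R I ≠ ⊥ := by
  intro h
  apply hI
  rw [eq_bot_iff]
  intro x hx
  have h1 : algebraMap R (FractionRing R) x ∈ idealToFrac R I := ⟨x, hx, rfl⟩
  rw [h, Submodule.mem_bot] at h1
  exact (IsFractionRing.injective R (FractionRing R)) (by rw [h1, map_zero])

theorem idealToFrac_mono {R : Type*} [CommRing R] [IsDomain R] {I J : Ideal R} (h : I ≤ J) :
    idealToFrac R I ≤ idealToFrac R J := Submodule.map_mono h

theorem star_eq_iff {R : Type*} [CommRing R] [IsDomain R]
    {s : Submodule R (FractionRing R) → Submodule R (FractionRing R)}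
    (hs : IsSemistarOp R s) {I : Ideal R} (hI : I ≠ ⊥) :
    s (idealToFrac R I) = s (idealToFrac R ⊤) ↔ (1 : FractionRing R) ∈ s (idealToFrac R I) := by
  obtain ⟨h1, h2, h3, h4⟩ := hs
  have hT : idealToFrac R ⊤ ≠ ⊥ := idealToFrac_ne_bot (by simp)
  have hI' := idealToFrac_ne_bot hI
  constructor
  · intro h
    rw [h]
    exact h1 _ hT ⟨1, trivial, by simp⟩
  · intro h
    apply le_antisymm (h2 _ _ hI' hT (idealToFrac_mono le_top))
    rw [← h4 _ hI']
    refine h2 _ _ hT (ne_bot_of_le_ne_bot hI' (h1 _ hI')) ?_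
    rintro _ ⟨r, -, rfl⟩
    have := (s (idealToFrac R I)).smul_mem r h
    rwa [Algebra.smul_def, mul_one] at this

theorem star_mul {R : Type*} [CommRing R] [IsDomain R]
    {s : Submodule R (FractionRing R) → Submodule R (FractionRing R)}
    (hs : IsSemistarOp R s) {I J : Ideal R} (hI : I ≠ ⊥) (hJ : J ≠ ⊥)
    (h1I : (1 : FractionRing R) ∈ s (idealToFrac R I))
    (h1J : (1 : FractionRing R) ∈ s (idealToFrac R J)) :
    (1 : FractionRing R) ∈ s (idealToFrac R (I * J)) := by
  obtain ⟨h1, h2, h3, h4⟩ := hs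
  have hIJ : I * J ≠ ⊥ := mul_ne_zero hI hJ
  have hI' := idealToFrac_ne_bot hI
  have hJ' := idealToFrac_ne_bot hJ
  have hIJ' := idealToFrac_ne_bot hIJ
  have key : idealToFrac R J ≤ s (idealToFrac R (I * J)) := by
    rintro _ ⟨x, hx, rfl⟩
    by_cases hx0 : x = 0
    · simp [hx0]
    have hx1 : algebraMap R (FractionRing R) x ≠ 0 := by simpa using hx0
    have hm : algebraMap R (FractionRing R) x ∈
        algebraMap R (FractionRing R) x • s (idealToFrac R I) := by
      have := Submodule.smul_mem_pointwise_smul _ (algebraMap R (FractionRing R) x) _ h1I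
      simpa using this
    rw [← h3 _ hx1 _ hI'] at hm
    refine h2 _ _ ?_ hIJ' ?_ hm
    · intro hb
      obtain ⟨y, hy, hy0⟩ := Submodule.exists_mem_ne_zero_of_ne_bot hI'
      have := Submodule.smul_mem_pointwise_smul _ (algebraMap R (FractionRing R) x) _ hy
      rw [hb, Submodule.mem_bot, smul_eq_mul] at this
      exact mul_ne_zero hx1 hy0 this
    · intro z hz
      rw [Submodule.mem_smul_pointwise_iff_exists] at hz
      obtain ⟨_, ⟨y, hy, rfl⟩, rfl⟩ := hz
      exact ⟨y * x, Ideal.mul_mem_mul hy hx, by simp [mul_comm]⟩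
  have := h2 _ _ hJ' (ne_bot_of_le_ne_bot hIJ' (h1 _ hIJ')) key h1J
  rwa [h4 _ hIJ'] at this

theorem star_fg {R : Type*} [CommRing R] [IsDomain R]
    {s : Submodule R (FractionRing R) → Submodule R (FractionRing R)}
    (hs : IsFiniteTypeStar R s) {I : Ideal R} (hI : I ≠ ⊥)
    (h1I : (1 : FractionRing R) ∈ s (idealToFrac R I)) :
    ∃ J : Ideal R, J ≤ I ∧ J ≠ ⊥ ∧ J.FG ∧ (1 : FractionRing R) ∈ s (idealToFrac R J) := by
  have h := hs _ (idealToFrac_ne_bot hI)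
  have h1 : (1 : FractionRing R) ∈ (s (idealToFrac R I) : Set (FractionRing R)) := h1I
  rw [h] at h1
  simp only [Set.mem_iUnion, Set.mem_ofPred_eq] at h1
  obtain ⟨E, ⟨hE, hE0, hfg⟩, h1E⟩ := h1
  have hinj : Function.Injective (Algebra.linearMap R (FractionRing R)) :=
    IsFractionRing.injective R (FractionRing R)
  have hmap : idealToFrac R (E.comap (Algebra.linearMap R (FractionRing R))) = E := by
    apply Submodule.map_comap_eq_self
    exact hE.trans LinearMap.map_le_range
  refine ⟨E.comap (Algebra.linearMap R (FractionRing R)), ?_, ?_, ?_, ?_⟩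
  · intro x hx
    obtain ⟨y, hy, hxy⟩ := hE hx
    exact hinj hxy ▸ hy
  · intro hb
    rw [hb] at hmap
    apply hE0
    rw [← hmap]
    exact Submodule.map_bot _
  · refine Submodule.fg_of_fg_map_injective _ hinj ?_
    have : Submodule.map (Algebra.linearMap R (FractionRing R))
      (E.comap (Algebra.linearMap R (FractionRing R))) = E := hmap
    rw [this]
    exact hfg
  · rw [hmap]
    exact h1E

open Classical in
theorem idealValuation_of_standard_chain
    (R : Type*) [CommRing R] [IsDomain R]
    (s : ℕ → Submodule R (FractionRing R) → Submodule R (FractionRing R))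
    (hss : ∀ n, IsSemistarOp R (s n))
    (hft : ∀ n, IsFiniteTypeStar R (s n))
    (hstab : ∀ n, IsStableStar R (s n))
    (h0 : ∀ E : Submodule R (FractionRing R), E ≠ ⊥ → s 0 E = ⊤)
    (hdesc : ∀ n, ∀ E : Submodule R (FractionRing R), E ≠ ⊥ → s (n + 1) E ≤ s n E) :
    IsIdealValuation R
      (fun I => if I = ⊥ then 0
        else ⨆ (k : ℕ) (_ : s k (idealToFrac R I) = s k (idealToFrac R ⊤)), (k : ℕ∞)) := by
  have hle : ∀ (I : Ideal R), I ≠ ⊥ → ∀ n : ℕ,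
      ((n : ℕ∞) ≤ ⨆ (k : ℕ) (_ : s k (idealToFrac R I) = s k (idealToFrac R ⊤)), (k : ℕ∞)) ↔
        (1 : FractionRing R) ∈ s n (idealToFrac R I) := by
    intro I hI n
    have hI' := idealToFrac_ne_bot hI
    constructor
    · intro h
      cases n with
      | zero => rw [h0 _ hI']; trivial
      | succ n =>
        have hlt : (n : ℕ∞) < ⨆ (k : ℕ)
            (_ : s k (idealToFrac R I) = s k (idealToFrac R ⊤)), (k : ℕ∞) :=
          lt_of_lt_of_le (by exact_mod_cast Nat.lt_succ_self n) h
        simp only [lt_iSup_iff] at hlt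
        obtain ⟨k, hk, hnk⟩ := hlt
        have hnk' : n + 1 ≤ k := by exact_mod_cast hnk
        rw [star_eq_iff (hss k) hI] at hk
        exact (antitone_nat_of_succ_le (f := fun n => s n (idealToFrac R I))
          (fun n => hdesc n _ hI')) hnk' hk
    · intro h
      exact le_iSup₂_of_le n ((star_eq_iff (hss n) hI).2 h) le_rfl
  have hone : ∀ n, (1 : FractionRing R) ∈ s n (idealToFrac R ⊤) := fun n =>
    (star_eq_iff (hss n) (by simp)).1 rfl
  refine ⟨by simp, ?_, ?_, ?_⟩
  · beta_reduce
    rw [if_neg (by simp)]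
    rw [eq_top_iff]
    refine ENat.forall_natCast_le_iff_le.1 fun n _ => ?_
    exact (hle ⊤ (by simp) n).2 (hone n)
  · intro I J
    by_cases hI : I = ⊥
    · simp [hI]
    by_cases hJ : J = ⊥
    · simp [hJ]
    have hIJ : I * J ≠ ⊥ := mul_ne_zero hI hJ
    simp only [hI, hJ, hIJ, if_false]
    refine ENat.forall_natCast_le_iff_le.1 fun n hn => ?_
    rw [le_min_iff, hle I hI, hle J hJ] at hn
    rw [hle _ hIJ]
    exact star_mul (hss n) hI hJ hn.1 hn.2
  · intro I
    apply le_antisymm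
    · by_cases hI : I = ⊥
      · simp [hI]
      simp only [hI, if_false]
      refine ENat.forall_natCast_le_iff_le.1 fun n hn => ?_
      rw [hle I hI] at hn
      obtain ⟨J, hJI, hJ, hfg, h1⟩ := star_fg (hft n) hI hn
      refine le_iSup_of_le J (le_iSup_of_le hJI (le_iSup_of_le hfg ?_))
      rw [if_neg hJ]
      exact (hle J hJ n).2 h1
    · refine iSup_le fun J => iSup_le fun hJI => iSup_le fun _ => ?_
      by_cases hJ : J = ⊥
      · simp [hJ]
      have hI : I ≠ ⊥ := ne_bot_of_le_ne_bot hJ hJI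
      simp only [hI, hJ, if_false]
      refine ENat.forall_natCast_le_iff_le.1 fun n hn => ?_
      rw [hle J hJ] at hn
      rw [hle I hI]
      exact (hss n).2.1 _ _ (idealToFrac_ne_bot hJ) (idealToFrac_ne_bot hI)
        (idealToFrac_mono hJI) hn
end

section
/- Let R be an integral domain with quotient field K and ν an ideal valuation on R. For each n ∈ ℕ and each nonzero R-submodule E of K define E^{ν_n} = ∪{(E :_K J) : J an ideal of R with ν(J) ≥ n}, where (E :_K J) = {x ∈ K : xJ ⊆ E}. Then for every nonzero ideal I of R and every n ∈ ℕ: I^{ν_n} = R^{ν_n} if and only if ν(I) ≥ n. Consequently, ν(I) = sup{k ∈ ℕ : I^{ν_k} = R^{ν_k}} for every nonzero ideal I of R; that is, the ideal valuation associated to the chain of operations {ν_n} induced by ν is ν itself. -/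
/-- The colon `(E :_K J)` of an `R`-submodule `E` of the quotient field `K` by an ideal
`J` of `R`: the set of `x ∈ K` with `xJ ⊆ E`. -/
def fracColon (R : Type*) [CommRing R] [IsDomain R]
    (E : Submodule R (FractionRing R)) (J : Ideal R) : Set (FractionRing R) :=
  {x : FractionRing R | ∀ j ∈ J, x * algebraMap R (FractionRing R) j ∈ E}

/-- The semistar operation `ν_n` induced by an ideal valuation `ν`, as a set:
`E^{ν_n} = ∪ {(E :_K J) : J an ideal of R with ν(J) ≥ n}`. -/
def nuStar (R : Type*) [CommRing R] [IsDomain R] (ν : Ideal R → ℕ∞) (n : ℕ)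
    (E : Submodule R (FractionRing R)) : Set (FractionRing R) :=
  ⋃ J ∈ {J : Ideal R | (n : ℕ∞) ≤ ν J}, fracColon R E J

theorem idealValuation_recovered_from_chain
    (R : Type*) [CommRing R] [IsDomain R] (ν : Ideal R → ℕ∞)
    (hν : IsIdealValuation R ν) :
    (∀ I : Ideal R, I ≠ ⊥ → ∀ n : ℕ,
        (nuStar R ν n (idealToFrac R I) = nuStar R ν n (idealToFrac R ⊤) ↔ (n : ℕ∞) ≤ ν I)) ∧
    (∀ I : Ideal R, I ≠ ⊥ →
        ν I = ⨆ (k : ℕ)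
          (_ : nuStar R ν k (idealToFrac R I) = nuStar R ν k (idealToFrac R ⊤)), (k : ℕ∞)) := by
  obtain ⟨-, htop, hmul, hsup⟩ := hν
  have mono : ∀ I J : Ideal R, I ≤ J → ν I ≤ ν J := by
    intro I J h
    rw [hsup I, hsup J]
    refine iSup_le fun A => iSup_le fun hA => iSup_le fun hfg => ?_
    exact le_iSup_of_le A (le_iSup_of_le (hA.trans h) (le_iSup_of_le hfg le_rfl))
  have mem_star : ∀ (n : ℕ) (E : Submodule R (FractionRing R)) (x : FractionRing R),
      x ∈ nuStar R ν n E ↔ ∃ J : Ideal R, (n : ℕ∞) ≤ ν J ∧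
        ∀ j ∈ J, x * algebraMap R (FractionRing R) j ∈ E := by
    intro n E x
    simp [nuStar, fracColon]
  have mem_frac : ∀ (I : Ideal R) (x : FractionRing R),
      x ∈ idealToFrac R I ↔ ∃ a ∈ I, algebraMap R (FractionRing R) a = x := by
    intro I x
    simp [idealToFrac, Submodule.mem_map]
  have key : ∀ I : Ideal R, I ≠ ⊥ → ∀ n : ℕ,
      (nuStar R ν n (idealToFrac R I) = nuStar R ν n (idealToFrac R ⊤) ↔ (n : ℕ∞) ≤ ν I) := by
    intro I _ n
    constructor
    · intro h
      have h1 : (1 : FractionRing R) ∈ nuStar R ν n (idealToFrac R ⊤) := by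
        rw [mem_star]
        refine ⟨⊤, by simp [htop], fun j _ => ?_⟩
        rw [mem_frac]
        exact ⟨j, trivial, by simp⟩
      rw [← h, mem_star] at h1
      obtain ⟨J, hJ, hJI⟩ := h1
      refine hJ.trans (mono J I fun j hj => ?_)
      obtain ⟨a, ha, hae⟩ := (mem_frac _ _).1 (hJI j hj)
      rw [one_mul] at hae
      rwa [← IsFractionRing.injective R (FractionRing R) hae]
    · intro h
      ext x
      rw [mem_star, mem_star]
      constructor
      · rintro ⟨J, hJ, hx⟩
        refine ⟨J, hJ, fun j hj => ?_⟩
        obtain ⟨a, _, ha⟩ := (mem_frac _ _).1 (hx j hj)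
        exact (mem_frac _ _).2 ⟨a, trivial, ha⟩
      · rintro ⟨J, hJ, hx⟩
        refine ⟨I * J, (le_min h hJ).trans (hmul I J), fun j hj => ?_⟩
        induction hj using Submodule.mul_induction_on' with
        | mem_mul_mem m hm k hk =>
          obtain ⟨a, _, ha⟩ := (mem_frac _ _).1 (hx k hk)
          refine (mem_frac _ _).2 ⟨m * a, I.mul_mem_right a hm, ?_⟩
          rw [map_mul, map_mul, ha]
          ring
        | add y _ z _ hy hz =>
          rw [map_add, mul_add]
          exact add_mem hy hz
  refine ⟨key, fun I hI => ?_⟩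
  simp only [key I hI]
  apply le_antisymm
  · refine ENat.forall_natCast_le_iff_le.1 fun k hk => ?_
    exact le_iSup_of_le k (le_iSup_of_le hk le_rfl)
  · exact iSup_le fun k => iSup_le fun hk => hk
end

section
/- Let R be an integral domain with quotient field K and h a prime valuation on R. For each k ∈ ℕ let Δ_k = {Q ∈ Spec(R) : h(Q) ≤ k}, and for an R-submodule E of K let E^{*_k} = ∩{E·R_Q : Q ∈ Δ_k}, where E·R_Q denotes the R_Q-submodule of K generated by E (with R_Q viewed as a subring of K). Then for every nonzero prime ideal P of R, h(P) = inf{k ∈ ℕ : P^{*_k} ≠ R^{*_k}} (with the convention inf ∅ = ∞). -/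
/-- The localization `R_Q` of `R` at a prime `Q`, viewed as a subset of the quotient
field: the elements expressible as fractions `r/s` with `s ∉ Q`. -/
def locAtSet (R : Type*) [CommRing R] [IsDomain R] (Q : PrimeSpectrum R) :
    Set (FractionRing R) :=
  {y : FractionRing R | ∃ r s : R, s ∉ Q.asIdeal ∧
    algebraMap R (FractionRing R) s * y = algebraMap R (FractionRing R) r}

/-- The `R_Q`-submodule `E·R_Q` of the quotient field generated by an `R`-submodule `E`. -/
def locSMul (R : Type*) [CommRing R] [IsDomain R] (Q : PrimeSpectrum R)
    (E : Submodule R (FractionRing R)) : Submodule R (FractionRing R) :=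
  Submodule.span R {z : FractionRing R | ∃ y ∈ locAtSet R Q, ∃ e ∈ E, z = y * e}

/-- The spectral semistar operation `*_k` induced by a prime valuation `h`:
`E^{*_k} = ∩ {E·R_Q : Q prime with h(Q) ≤ k}`. -/
def specStar (R : Type*) [CommRing R] [IsDomain R] (h : PrimeSpectrum R → ℕ∞) (k : ℕ)
    (E : Submodule R (FractionRing R)) : Submodule R (FractionRing R) :=
  ⨅ (Q : PrimeSpectrum R) (_ : h Q ≤ (k : ℕ∞)), locSMul R Q E

theorem mem_locSMul_ideal (R : Type*) [CommRing R] [IsDomain R] (Q : PrimeSpectrum R)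
    (I : Ideal R) (z : FractionRing R) :
    z ∈ locSMul R Q (idealToFrac R I) ↔ ∃ s : R, s ∉ Q.asIdeal ∧ ∃ r ∈ I,
      algebraMap R (FractionRing R) s * z = algebraMap R (FractionRing R) r := by
  constructor
  · intro hz
    unfold locSMul at hz
    induction hz using Submodule.span_induction with
    | mem x hx =>
      obtain ⟨y, ⟨r, s, hs, hy⟩, e, he, rfl⟩ := hx
      obtain ⟨a, ha, rfl⟩ := he
      refine ⟨s, hs, r * a, I.mul_mem_left r ha, ?_⟩
      rw [← mul_assoc, hy, map_mul, Algebra.linearMap_apply]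
    | zero => exact ⟨1, fun h1 => Q.2.ne_top ((Ideal.eq_top_iff_one _).2 h1), 0, I.zero_mem, by simp⟩
    | add x y _ _ hx hy =>
      obtain ⟨s, hs, r, hr, h1⟩ := hx
      obtain ⟨t, ht, u, hu, h2⟩ := hy
      refine ⟨s * t, fun hm => (Q.2.mem_or_mem hm).elim hs ht, t * r + s * u,
        I.add_mem (I.mul_mem_left _ hr) (I.mul_mem_left _ hu), ?_⟩
      simp only [map_mul, map_add]
      rw [← h1, ← h2]
      ring
    | smul a x _ hx =>
      obtain ⟨s, hs, r, hr, h1⟩ := hx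
      refine ⟨s, hs, a * r, I.mul_mem_left _ hr, ?_⟩
      rw [Algebra.smul_def, map_mul, ← h1]
      ring
  · rintro ⟨s, hs, r, hr, h1⟩
    have hs0 : algebraMap R (FractionRing R) s ≠ 0 := by
      intro h0
      have : s = 0 := (IsFractionRing.injective R (FractionRing R)) (by simpa using h0)
      exact hs (this ▸ Q.asIdeal.zero_mem)
    refine Submodule.subset_span ⟨(algebraMap R (FractionRing R) s)⁻¹, ⟨1, s, hs, ?_⟩,
      algebraMap R (FractionRing R) r, ⟨r, hr, rfl⟩, ?_⟩
    · rw [mul_inv_cancel₀ hs0, map_one]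
    · rw [← h1, inv_mul_cancel_left₀ hs0]

theorem specStar_ne_iff (R : Type*) [CommRing R] [IsDomain R] (h : PrimeSpectrum R → ℕ∞)
    (hpv : IsPrimeValuation R h) (P : PrimeSpectrum R) (k : ℕ) :
    specStar R h k (idealToFrac R P.asIdeal) ≠ specStar R h k (idealToFrac R ⊤) ↔
      h P ≤ k := by
  constructor
  · intro hne
    by_contra hk
    apply hne
    unfold specStar
    refine iInf_congr fun Q => iInf_congr fun hQ => ?_
    have hPQ : ¬ P.asIdeal ≤ Q.asIdeal := fun hle => hk ((hpv.2 P Q hle).trans hQ)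
    obtain ⟨p, hp, hpQ⟩ := SetLike.not_le_iff_exists.1 hPQ
    ext z
    rw [mem_locSMul_ideal, mem_locSMul_ideal]
    constructor
    · rintro ⟨s, hs, r, -, h1⟩
      exact ⟨s, hs, r, trivial, h1⟩
    · rintro ⟨s, hs, r, -, h1⟩
      refine ⟨p * s, fun hm => (Q.2.mem_or_mem hm).elim hpQ hs, p * r,
        P.asIdeal.mul_mem_right _ hp, ?_⟩
      rw [map_mul, map_mul, ← h1, mul_assoc]
  · intro hk heq
    have h1 : (1 : FractionRing R) ∈ specStar R h k (idealToFrac R ⊤) := by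
      unfold specStar
      simp only [Submodule.mem_iInf]
      intro Q _
      rw [mem_locSMul_ideal]
      exact ⟨1, fun h1 => Q.2.ne_top ((Ideal.eq_top_iff_one _).2 h1), 1, trivial, by simp⟩
    rw [← heq] at h1
    unfold specStar at h1
    simp only [Submodule.mem_iInf] at h1
    obtain ⟨s, hs, r, hr, h2⟩ := (mem_locSMul_ideal R P _ _).1 (h1 P hk)
    rw [mul_one] at h2
    exact hs (IsFractionRing.injective R (FractionRing R) h2 ▸ hr)

theorem primeValuation_recovered_from_spectral_chain
    (R : Type*) [CommRing R] [IsDomain R] (h : PrimeSpectrum R → ℕ∞)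
    (hpv : IsPrimeValuation R h) :
    ∀ P : PrimeSpectrum R, P.asIdeal ≠ ⊥ →
      h P = ⨅ (k : ℕ)
        (_ : specStar R h k (idealToFrac R P.asIdeal) ≠ specStar R h k (idealToFrac R ⊤)),
          (k : ℕ∞) := by
  intro P _
  apply le_antisymm
  · exact le_iInf fun k => le_iInf fun hk => (specStar_ne_iff R h hpv P k).1 hk
  · by_cases ht : h P = ⊤
    · rw [ht]
      exact le_top
    · obtain ⟨n, hn⟩ := ENat.ne_top_iff_exists.1 ht
      refine (iInf₂_le n ((specStar_ne_iff R h hpv P n).2 hn.ge)).trans hn.le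
end

section
/- Let R be a valuation domain with quotient field K, let {*_α}_{α∈A} be a family of semistar operations on R, and let *_A be the semistar operation defined by E^{*_A} = ∩_{α∈A} E^{*_α} for each E ∈ F̄(R). For a semistar operation * on R, set F^* = {I : I an ideal of R with I^* = R^*}. Then the following are equivalent: (1) *_A is of finite type; (2) ∩_{α∈A} F^{*_α} is a localizing system of finite type on R; (3) there exists α ∈ A such that E^{*_A} = E·R^{*_α} for every E ∈ F̄(R), where E·R^{*_α} denotes the R^{*_α}-submodule of K generated by E. -/
open Pointwise

/-- The localizing system `F^* = {I : I a nonzero ideal of R with I^* = R^*}` associated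
to a semistar operation. -/
def starLS (R : Type*) [CommRing R] [IsDomain R]
    (s : Submodule R (FractionRing R) → Submodule R (FractionRing R)) : Set (Ideal R) :=
  {I : Ideal R | I ≠ ⊥ ∧ s (idealToFrac R I) = s (idealToFrac R ⊤)}

/-- A localizing system on an integral domain `R`. -/
def IsLocalizingSystem (R : Type*) [CommRing R] (F : Set (Ideal R)) : Prop :=
  F.Nonempty ∧
  (∀ I ∈ F, ∀ J : Ideal R, I ≤ J → J ∈ F) ∧
  (∀ I ∈ F, ∀ J : Ideal R, (∀ i ∈ I, Submodule.colon J (Ideal.span {i}) ∈ F) → J ∈ F)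

/-- A family of ideals is of finite type if every member contains a finitely generated member. -/
def IsFiniteTypeLS (R : Type*) [CommRing R] (F : Set (Ideal R)) : Prop :=
  ∀ I ∈ F, ∃ J ∈ F, J ≤ I ∧ J.FG

namespace CG

variable {R : Type*} [CommRing R] [IsDomain R]

theorem mem_smul_iff {x : FractionRing R} (hx : x ≠ 0) (E : Submodule R (FractionRing R))
    (y : FractionRing R) : y ∈ x • E ↔ x⁻¹ * y ∈ E := by
  rw [Submodule.mem_smul_pointwise_iff_exists]
  constructor
  · rintro ⟨b, hb, rfl⟩
    simpa [smul_eq_mul, inv_mul_cancel_left₀ hx] using hb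
  · intro h
    exact ⟨_, h, by simp [smul_eq_mul, mul_inv_cancel_left₀ hx]⟩

theorem smul_ne_bot {x : FractionRing R} (hx : x ≠ 0) {E : Submodule R (FractionRing R)}
    (hE : E ≠ ⊥) : x • E ≠ ⊥ := by
  obtain ⟨e, he, he0⟩ := Submodule.exists_mem_ne_zero_of_ne_bot hE
  refine (Submodule.ne_bot_iff _).2 ⟨x * e, ?_, mul_ne_zero hx he0⟩
  rw [mem_smul_iff hx, inv_mul_cancel_left₀ hx]
  exact he

theorem span_ne_bot {x : FractionRing R} (hx : x ≠ 0) :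
    Submodule.span R {x} ≠ ⊥ := by
  simpa [Submodule.span_singleton_eq_bot] using hx

theorem mem_U (y : FractionRing R) :
    y ∈ idealToFrac R ⊤ ↔ ∃ r : R, algebraMap R (FractionRing R) r = y := by
  simp [idealToFrac]

theorem U_ne_bot : idealToFrac R ⊤ ≠ ⊥ :=
  (Submodule.ne_bot_iff _).2 ⟨1, (mem_U _).2 ⟨1, map_one _⟩, one_ne_zero⟩

theorem span_eq {x : FractionRing R} (hx : x ≠ 0) :
    Submodule.span R {x} = x • idealToFrac R ⊤ := by
  ext y
  rw [mem_smul_iff hx, mem_U, Submodule.mem_span_singleton]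
  constructor
  · rintro ⟨r, rfl⟩
    exact ⟨r, by rw [Algebra.smul_def]; field_simp⟩
  · rintro ⟨r, hr⟩
    exact ⟨r, by rw [Algebra.smul_def, hr]; field_simp⟩

theorem U_le {E : Submodule R (FractionRing R)} (h : (1 : FractionRing R) ∈ E) :
    idealToFrac R ⊤ ≤ E := by
  intro y hy
  obtain ⟨r, rfl⟩ := (mem_U y).1 hy
  simpa [Algebra.smul_def] using E.smul_mem r h

theorem mem_star_smul {s : Submodule R (FractionRing R) → Submodule R (FractionRing R)}
    (hs : IsSemistarOp R s) {x : FractionRing R} (hx : x ≠ 0)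
    {E : Submodule R (FractionRing R)} (hE : E ≠ ⊥) (y : FractionRing R) :
    y ∈ s (x • E) ↔ x⁻¹ * y ∈ s E := by
  rw [hs.2.2.1 x hx E hE, mem_smul_iff hx]

theorem mem_star_span {s : Submodule R (FractionRing R) → Submodule R (FractionRing R)}
    (hs : IsSemistarOp R s) {x : FractionRing R} (hx : x ≠ 0) (y : FractionRing R) :
    y ∈ s (Submodule.span R {x}) ↔ x⁻¹ * y ∈ s (idealToFrac R ⊤) := by
  rw [span_eq hx, mem_star_smul hs hx U_ne_bot]

theorem mem_star {s : Submodule R (FractionRing R) → Submodule R (FractionRing R)}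
    (hs : IsSemistarOp R s) {E : Submodule R (FractionRing R)} {x y : FractionRing R}
    (hx : x ≠ 0) (hxE : x ∈ E) (h : x⁻¹ * y ∈ s (idealToFrac R ⊤)) : y ∈ s E :=
  hs.2.1 _ _ (span_ne_bot hx) ((Submodule.ne_bot_iff _).2 ⟨x, hxE, hx⟩)
    ((Submodule.span_singleton_le_iff_mem _ _).2 hxE) ((mem_star_span hs hx y).2 h)

theorem toFrac_ne_bot {I : Ideal R} (hI : I ≠ ⊥) : idealToFrac R I ≠ ⊥ := by
  obtain ⟨e, he, he0⟩ := Submodule.exists_mem_ne_zero_of_ne_bot hI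
  refine (Submodule.ne_bot_iff _).2 ⟨algebraMap R _ e, ⟨e, he, rfl⟩, ?_⟩
  simpa using he0

theorem mem_starLS {s : Submodule R (FractionRing R) → Submodule R (FractionRing R)}
    (hs : IsSemistarOp R s) (I : Ideal R) :
    I ∈ starLS R s ↔ I ≠ ⊥ ∧ (1 : FractionRing R) ∈ s (idealToFrac R I) := by
  refine and_congr_right fun hI => ?_
  have hI' := toFrac_ne_bot hI
  constructor
  · intro h
    rw [h]
    exact hs.1 _ U_ne_bot ((mem_U _).2 ⟨1, map_one _⟩)
  · intro h
    apply le_antisymm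
    · exact hs.2.1 _ _ hI' U_ne_bot (Submodule.map_mono le_top)
    · rw [← hs.2.2.2 _ hI']
      exact hs.2.1 _ _ U_ne_bot (fun h0 => hI' (le_bot_iff.1 (h0 ▸ hs.1 _ hI'))) (U_le h)

section val
variable [ValuationRing R]

theorem total (x y : FractionRing R) :
    x ∈ Submodule.span R {y} ∨ y ∈ Submodule.span R {x} := by
  have key : ∀ x y : FractionRing R, y ≠ 0 → (∃ r : R, algebraMap R _ r = x / y) →
      x ∈ Submodule.span R {y} := by
    rintro x y hy ⟨r, hr⟩
    exact Submodule.mem_span_singleton.2 ⟨r, by rw [Algebra.smul_def, hr]; field_simp⟩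
  by_cases hx : x = 0
  · left; simp [hx]
  by_cases hy : y = 0
  · right; simp [hy]
  rcases ValuationRing.isInteger_or_isInteger R (x / y) with h | h
  · exact .inl (key _ _ hy h)
  · rw [inv_div] at h
    exact .inr (key _ _ hx h)

theorem fg_gen (J : Submodule R (FractionRing R)) (hJ : J.FG) :
    ∃ x ∈ J, J = Submodule.span R {x} := by
  induction J, hJ using Submodule.fg_induction with
  | singleton x => exact ⟨x, Submodule.mem_span_singleton_self x, rfl⟩
  | sup M N _ _ hM hN =>
    obtain ⟨x, hx, rfl⟩ := hM
    obtain ⟨y, hy, rfl⟩ := hN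
    rcases total x y with h | h
    · refine ⟨y, Submodule.mem_sup_right hy, sup_eq_right.2 ?_⟩
      exact (Submodule.span_singleton_le_iff_mem _ _).2 h
    · refine ⟨x, Submodule.mem_sup_left hx, sup_eq_left.2 ?_⟩
      exact (Submodule.span_singleton_le_iff_mem _ _).2 h

theorem mem_mul {T E : Submodule R (FractionRing R)} {y : FractionRing R} (h : y ∈ T * E) :
    ∃ t ∈ T, ∃ e ∈ E, t * e = y := by
  induction h using Submodule.mul_induction_on' with
  | mem_mul_mem m hm n hn => exact ⟨m, hm, n, hn, rfl⟩
  | add x _ y _ hx hy =>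
    obtain ⟨t, ht, e, he, rfl⟩ := hx
    obtain ⟨t', ht', e', he', rfl⟩ := hy
    rcases total e e' with h | h
    · obtain ⟨r, rfl⟩ := Submodule.mem_span_singleton.1 h
      refine ⟨r • t + t', T.add_mem (T.smul_mem r ht) ht', e', he', ?_⟩
      simp only [Algebra.smul_def]; ring
    · obtain ⟨r, rfl⟩ := Submodule.mem_span_singleton.1 h
      refine ⟨t + r • t', T.add_mem ht (T.smul_mem r ht'), e, he, ?_⟩
      simp only [Algebra.smul_def]; ring

variable {A : Type*} [Nonempty A]
    {s : A → Submodule R (FractionRing R) → Submodule R (FractionRing R)}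

/-- The key property: if `1 ∈ E^{*_A}` then `E` contains a unit of `R^{*_A}` whose inverse is
there as well. -/
def Q (s : A → Submodule R (FractionRing R) → Submodule R (FractionRing R)) : Prop :=
  ∀ E : Submodule R (FractionRing R), E ≠ ⊥ → (∀ α, (1 : FractionRing R) ∈ s α E) →
    ∃ x ∈ E, x ≠ 0 ∧ ∀ α, x⁻¹ ∈ s α (idealToFrac R ⊤)

theorem Q_gen (hs : ∀ α : A, IsSemistarOp R (s α)) (h : Q s)
    {E : Submodule R (FractionRing R)} (hE : E ≠ ⊥) {y : FractionRing R} (hy : y ≠ 0)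
    (hyE : ∀ α, y ∈ s α E) :
    ∃ e ∈ E, e ≠ 0 ∧ ∀ α, e⁻¹ * y ∈ s α (idealToFrac R ⊤) := by
  obtain ⟨x, hx, hx0, hxT⟩ := h (y⁻¹ • E) (smul_ne_bot (inv_ne_zero hy) hE) (fun α => by
    rw [mem_star_smul (hs α) (inv_ne_zero hy) hE]
    simpa using hyE α)
  rw [mem_smul_iff (inv_ne_zero hy), inv_inv] at hx
  refine ⟨y * x, hx, mul_ne_zero hy hx0, fun α => ?_⟩
  have : (y * x)⁻¹ * y = x⁻¹ := by field_simp
  rw [this]; exact hxT α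

theorem one_to_Q (hs : ∀ α : A, IsSemistarOp R (s α))
    (h : IsFiniteTypeStar R (fun E => ⨅ α : A, s α E)) : Q s := by
  intro E hE h1
  have h2 : (1 : FractionRing R) ∈ ((⨅ α : A, s α E : Submodule R (FractionRing R)) : Set (FractionRing R)) := by
    simpa using h1
  rw [h E hE] at h2
  simp only [Set.mem_iUnion, Set.mem_ofPred_eq, SetLike.mem_coe, Submodule.mem_iInf] at h2
  obtain ⟨J, ⟨hJE, hJ0, hJ⟩, h1J⟩ := h2
  obtain ⟨x, hx, rfl⟩ := fg_gen J hJ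
  have hx0 : x ≠ 0 := by
    rintro rfl
    simp at hJ0
  exact ⟨x, hJE hx, hx0, fun α => by simpa using (mem_star_span (hs α) hx0 1).1 (h1J α)⟩

theorem Q_to_one (hs : ∀ α : A, IsSemistarOp R (s α)) (h : Q s) :
    IsFiniteTypeStar R (fun E => ⨅ α : A, s α E) := by
  intro E hE
  ext y
  simp only [Set.mem_iUnion, Set.mem_ofPred_eq, SetLike.mem_coe, Submodule.mem_iInf]
  constructor
  · intro hy
    by_cases hy0 : y = 0
    · obtain ⟨e, he, he0⟩ := Submodule.exists_mem_ne_zero_of_ne_bot hE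
      refine ⟨Submodule.span R {e}, ⟨(Submodule.span_singleton_le_iff_mem _ _).2 he,
        span_ne_bot he0, Submodule.fg_span_singleton e⟩, fun α => ?_⟩
      rw [hy0]; exact zero_mem _
    · obtain ⟨e, he, he0, heT⟩ := Q_gen hs h hE hy0 hy
      exact ⟨Submodule.span R {e}, ⟨(Submodule.span_singleton_le_iff_mem _ _).2 he,
        span_ne_bot he0, Submodule.fg_span_singleton e⟩,
        fun α => (mem_star_span (hs α) he0 y).2 (heT α)⟩
  · rintro ⟨J, ⟨hJE, hJ0, -⟩, hy⟩ α
    exact (hs α).2.1 _ _ hJ0 hE hJE (hy α)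

theorem Q_to_three (hs : ∀ α : A, IsSemistarOp R (s α)) (h : Q s) :
    ∃ α : A, ∀ E : Submodule R (FractionRing R), E ≠ ⊥ →
        (⨅ β : A, s β E) = s α (idealToFrac R ⊤) * E := by
  have hex : ∃ α, ∀ β, s α (idealToFrac R ⊤) ≤ s β (idealToFrac R ⊤) := by
    by_contra! hcon
    have hz : ∀ α, ∃ z, z ≠ 0 ∧ z ∈ s α (idealToFrac R ⊤) ∧
        ∃ β, z ∉ s β (idealToFrac R ⊤) := by
      intro α
      obtain ⟨β, hβ⟩ := hcon α
      obtain ⟨z, hz, hz'⟩ := SetLike.not_le_iff_exists.1 hβ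
      exact ⟨z, fun h0 => hz' (h0 ▸ zero_mem _), hz, β, hz'⟩
    choose z hz0 hz1 b hzb using hz
    have hmem : ∀ α, (z α)⁻¹ ∈ ⨆ α, Submodule.span R {(z α)⁻¹} := fun α =>
      Submodule.mem_iSup_of_mem α (Submodule.mem_span_singleton_self _)
    obtain ⟨x, hx, hx0, hxT⟩ := h (⨆ α, Submodule.span R {(z α)⁻¹})
      ((Submodule.ne_bot_iff _).2 ⟨_, hmem (Classical.arbitrary A), inv_ne_zero (hz0 _)⟩)
      (fun α => mem_star (hs α) (inv_ne_zero (hz0 α)) (hmem α) (by simpa using hz1 α))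
    rw [Submodule.mem_iSup_of_directed] at hx
    · obtain ⟨α, hx⟩ := hx
      obtain ⟨r, rfl⟩ := Submodule.mem_span_singleton.1 hx
      apply hzb α
      have h2 := (s (b α) (idealToFrac R ⊤)).smul_mem r (hxT (b α))
      rw [Algebra.smul_def] at h2 hx0
      have hr := left_ne_zero_of_mul hx0
      convert h2 using 1
      rw [Algebra.smul_def]
      have := hz0 α
      field_simp
    · intro α β
      rcases total (z α)⁻¹ (z β)⁻¹ with h | h
      · exact ⟨β, (Submodule.span_singleton_le_iff_mem _ _).2 h, le_rfl⟩
      · exact ⟨α, le_rfl, (Submodule.span_singleton_le_iff_mem _ _).2 h⟩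
  obtain ⟨α, hα⟩ := hex
  refine ⟨α, fun E hE => le_antisymm ?_ ?_⟩
  · intro y hy
    by_cases hy0 : y = 0
    · rw [hy0]; exact zero_mem _
    obtain ⟨e, he, he0, heT⟩ := Q_gen hs h hE hy0 (by simpa using hy)
    have : y = (e⁻¹ * y) * e := by field_simp
    rw [this]
    exact Submodule.mul_mem_mul (heT α) he
  · rw [Submodule.mul_le]
    intro t ht e he
    rw [Submodule.mem_iInf]
    intro β
    by_cases he0 : e = 0
    · rw [he0, mul_zero]; exact zero_mem _
    refine mem_star (hs β) he0 he ?_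
    have : e⁻¹ * (t * e) = t := by field_simp
    rw [this]; exact hα β ht

theorem three_to_Q (h : ∃ α : A, ∀ E : Submodule R (FractionRing R), E ≠ ⊥ →
        (⨅ β : A, s β E) = s α (idealToFrac R ⊤) * E) : Q s := by
  obtain ⟨α, h⟩ := h
  intro E hE h1
  have h2 : (1 : FractionRing R) ∈ ⨅ β : A, s β E := by simpa using h1
  rw [h E hE] at h2
  obtain ⟨t, ht, e, he, hte⟩ := mem_mul h2
  have he0 : e ≠ 0 := by rintro rfl; simp at hte
  refine ⟨e, he, he0, fun β => ?_⟩
  rw [← eq_inv_of_mul_eq_one_left hte]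
  have h3 : t ∈ ⨅ β : A, s β (idealToFrac R ⊤) := by
    rw [h _ U_ne_bot, ← mul_one t]
    exact Submodule.mul_mem_mul ht ((mem_U _).2 ⟨1, map_one _⟩)
  exact (Submodule.mem_iInf _).1 h3 β

theorem two_to_Q (hs : ∀ α : A, IsSemistarOp R (s α))
    (h : IsFiniteTypeLS R (⋂ α : A, starLS R (s α))) : Q s := by
  intro E hE h1
  have hone : ∀ α, (1 : FractionRing R) ∈ s α (idealToFrac R ⊤) := fun α =>
    (hs α).1 _ U_ne_bot ((mem_U _).2 ⟨1, map_one _⟩)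
  by_cases h1E : (1 : FractionRing R) ∈ E
  · exact ⟨1, h1E, one_ne_zero, by simpa using hone⟩
  have hEU : E ≤ idealToFrac R ⊤ := by
    intro y hy
    rcases total 1 y with h | h
    · exact absurd ((Submodule.span_singleton_le_iff_mem _ _).2 hy h) h1E
    · obtain ⟨r, rfl⟩ := Submodule.mem_span_singleton.1 h
      exact (mem_U _).2 ⟨r, by simp [Algebra.smul_def]⟩
  set I : Ideal R := Submodule.comap (Algebra.linearMap R (FractionRing R)) E with hI
  have hIE : idealToFrac R I = E := by
    apply le_antisymm
    · exact Submodule.map_comap_le _ _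
    · intro y hy
      obtain ⟨r, rfl⟩ := (mem_U _).1 (hEU hy)
      exact ⟨r, hy, rfl⟩
  have hI0 : I ≠ ⊥ := by
    intro h0
    rw [h0] at hIE
    exact hE (by rw [← hIE]; simp [idealToFrac])
  obtain ⟨J, hJ, hJI, hJfg⟩ := h I (Set.mem_iInter.2 fun α =>
    (mem_starLS (hs α) I).2 ⟨hI0, by rw [hIE]; exact h1 α⟩)
  simp only [Set.mem_iInter, mem_starLS (hs _)] at hJ
  have hJ0 := toFrac_ne_bot (hJ (Classical.arbitrary A)).1
  obtain ⟨x, hx, hxJ⟩ := fg_gen (idealToFrac R J) (Submodule.FG.map _ hJfg)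
  have hx0 : x ≠ 0 := by
    rintro rfl
    simp [hxJ] at hJ0
  refine ⟨x, ?_, hx0, fun α => ?_⟩
  · rw [← hIE]; exact Submodule.map_mono hJI hx
  · have := (hJ α).2
    rw [hxJ, mem_star_span (hs α) hx0] at this
    simpa using this

theorem mem_inter (hs : ∀ α : A, IsSemistarOp R (s α)) (h : Q s) (I : Ideal R) :
    I ∈ (⋂ α : A, starLS R (s α)) ↔ ∃ i ∈ I, i ≠ 0 ∧
      ∀ α, (algebraMap R (FractionRing R) i)⁻¹ ∈ s α (idealToFrac R ⊤) := by
  simp only [Set.mem_iInter, mem_starLS (hs _)]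
  constructor
  · intro hI
    obtain ⟨x, ⟨i, hi, rfl⟩, hx0, hxT⟩ := h _ (toFrac_ne_bot (hI (Classical.arbitrary A)).1)
      (fun α => (hI α).2)
    exact ⟨i, hi, by simpa using hx0, hxT⟩
  · rintro ⟨i, hi, hi0, hiT⟩ α
    refine ⟨(Submodule.ne_bot_iff _).2 ⟨i, hi, hi0⟩, ?_⟩
    exact mem_star (hs α) (x := algebraMap R _ i) (by simpa using hi0) ⟨i, hi, rfl⟩
      (by simpa using hiT α)

theorem Q_to_two (hs : ∀ α : A, IsSemistarOp R (s α)) (h : Q s) :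
    IsLocalizingSystem R (⋂ α : A, starLS R (s α)) ∧
        IsFiniteTypeLS R (⋂ α : A, starLS R (s α)) := by
  refine ⟨⟨⟨⊤, ?_⟩, ?_, ?_⟩, ?_⟩
  · rw [mem_inter hs h]
    exact ⟨1, trivial, one_ne_zero, fun α => by
      simpa using (hs α).1 _ U_ne_bot ((mem_U _).2 ⟨1, map_one _⟩)⟩
  · intro I hI J hIJ
    rw [mem_inter hs h] at hI ⊢
    obtain ⟨i, hi, h'⟩ := hI
    exact ⟨i, hIJ hi, h'⟩
  · intro I hI J hJ
    rw [mem_inter hs h] at hI ⊢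
    obtain ⟨i, hi, hi0, hiT⟩ := hI
    obtain ⟨x, hx, hx0, hxT⟩ := (mem_inter hs h _).1 (hJ i hi)
    have hxi : x * i ∈ J := by
      rw [Submodule.mem_colon] at hx
      exact hx i (Ideal.mem_span_singleton_self i)
    refine ⟨x * i, hxi, mul_ne_zero hx0 hi0, fun α => ?_⟩
    -- `i⁻¹ ∈ R^*` means `1 ∈ (i)^*`, and `x⁻¹ R^* ⊆ R^*`
    have hi0' : algebraMap R (FractionRing R) i ≠ 0 := by simpa using hi0
    have hx0' : algebraMap R (FractionRing R) x ≠ 0 := by simpa using hx0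
    have h2 : s α (Submodule.span R {(algebraMap R (FractionRing R) x)⁻¹}) ≤
        s α (idealToFrac R ⊤) := by
      have hne : s α (idealToFrac R ⊤) ≠ ⊥ :=
        (Submodule.ne_bot_iff _).2 ⟨_, hxT α, inv_ne_zero hx0'⟩
      conv_rhs => rw [← (hs α).2.2.2 _ U_ne_bot]
      exact (hs α).2.1 _ _ (span_ne_bot (inv_ne_zero hx0')) hne
        ((Submodule.span_singleton_le_iff_mem _ _).2 (hxT α))
    apply h2
    rw [mem_star_span (hs α) (inv_ne_zero hx0')]
    convert hiT α using 1
    rw [map_mul]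
    field_simp
  · intro I hI
    obtain ⟨i, hi, h'⟩ := (mem_inter hs h _).1 hI
    refine ⟨Ideal.span {i}, (mem_inter hs h _).2 ⟨i, Ideal.mem_span_singleton_self i, h'⟩,
      ?_, Submodule.fg_span_singleton i⟩
    exact (Ideal.span_singleton_le_iff_mem _).2 hi

end val

end CG

theorem chapman_glaz_for_valuation_domains
    (R : Type*) [CommRing R] [IsDomain R] [ValuationRing R]
    (A : Type*) [Nonempty A]
    (s : A → Submodule R (FractionRing R) → Submodule R (FractionRing R))
    (hs : ∀ α : A, IsSemistarOp R (s α)) :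
    (IsFiniteTypeStar R (fun E => ⨅ α : A, s α E) ↔
      (IsLocalizingSystem R (⋂ α : A, starLS R (s α)) ∧
        IsFiniteTypeLS R (⋂ α : A, starLS R (s α)))) ∧
    (IsFiniteTypeStar R (fun E => ⨅ α : A, s α E) ↔
      (∃ α : A, ∀ E : Submodule R (FractionRing R), E ≠ ⊥ →
        (⨅ β : A, s β E) = s α (idealToFrac R ⊤) * E)) := by
  exact ⟨⟨fun h => CG.Q_to_two hs (CG.one_to_Q hs h), fun h => CG.Q_to_one hs (CG.two_to_Q hs h.2)⟩,
    ⟨fun h => CG.Q_to_three hs (CG.one_to_Q hs h), fun h => CG.Q_to_one hs (CG.three_to_Q h)⟩⟩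
end
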